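/- Let n ≥ 4 and let Ω ⊂ ℝ^{1+n} be a bounded domain (connected open set) with smooth boundary. Write α = 1 + 2/(n−1) and β = 1 − 2/(n−1), let Δ denote the full Laplacian Σ_{i=0}^n ∂ᵢ² on ℝ^{1+n}, and let w = (w₀, w₁, …, wₙ) be a vector field whose components are smooth on an open neighborhood of the closure of Ω. If w satisfies Δw₀ + (α−β) ∂₀² w₀ + β Σ_{k=0}^n ∂ₖ∂₀ wₖ = 0 and Δwⱼ + (α−β) ∂₀∂ⱼ w₀ + β Σ_{k=0}^n ∂ₖ∂ⱼ wₖ = 0 for all 1 ≤ j ≤ n on Ω, and w = 0 on ∂Ω, then w ≡ 0 on Ω. -/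

import Mathlib

/-!
Put `γ = α - β`. With `A i j = ∂ᵢ wⱼ`, the system says that the columns of the stress
`P i j = A i j + δᵢⱼ (β tr A + (γ/2) A₀₀) + δᵢ₀ (γ/2) A j 0` are divergence free; the term
`γ ∂₀∂ⱼ w₀` is split evenly between the last two summands. Since `w` vanishes on `∂Ω`, the integral
of `∑ P i j * A i j` over `Ω` is zero. This integrand is a positive definite quadratic form in `A`
as soon as `0 ≤ β ≤ α` and `n γ² < 16`, so `w` has zero gradient on `Ω`, and then `w = 0` because
`∂ᵥ(ℓ wⱼ²) = wⱼ²` integrates to zero for a linear form `ℓ` with `ℓ v = 1`.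

The integration by parts holds on any bounded open `Ω`: a function vanishing on `∂Ω` and extended by
zero outside `Ω` stays Lipschitz, and its derivative vanishes almost everywhere outside `Ω`.
-/

open MeasureTheory Set Topology
open scoped ContDiff NNReal

theorem integrableOn_of_continuousOn_of_closure_subset {X F : Type*} [MetricSpace X]
    [ProperSpace X] [MeasurableSpace X] [OpensMeasurableSpace X] [NormedAddCommGroup F]
    {μ : Measure X} [IsFiniteMeasureOnCompacts μ] {f : X → F} {Ω V : Set X}
    (hΩ_bdd : Bornology.IsBounded Ω) (hΩV : closure Ω ⊆ V) (hf : ContinuousOn f V) :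
    IntegrableOn f Ω μ :=
  ((hf.mono hΩV).integrableOn_compact hΩ_bdd.isCompact_closure).mono_set subset_closure

theorem eqOn_zero_of_setIntegral_eq_zero {X : Type*} [TopologicalSpace X] [MeasurableSpace X]
    [OpensMeasurableSpace X] {μ : Measure X} [μ.IsOpenPosMeasure] {f : X → ℝ} {Ω : Set X}
    (hΩ : IsOpen Ω) (hf : ContinuousOn f Ω) (hf_int : IntegrableOn f Ω μ)
    (hf_nonneg : ∀ x ∈ Ω, 0 ≤ f x) (h_zero : ∫ x in Ω, f x ∂μ = 0) : EqOn f 0 Ω :=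
  have h_ae : f =ᵐ[μ.restrict Ω] 0 := (setIntegral_eq_zero_iff_of_nonneg_ae
    (ae_restrict_of_forall_mem hΩ.measurableSet hf_nonneg) hf_int).1 h_zero
  Measure.eqOn_open_of_ae_eq h_ae hΩ hf continuousOn_const

section NormedSpace

variable {E : Type*} [NormedAddCommGroup E] [NormedSpace ℝ E] [FiniteDimensional ℝ E]

theorem exists_contDiff_hasCompactSupport_eqOn {F : Type*} [NormedAddCommGroup F]
    [NormedSpace ℝ F] {n : ℕ∞} {f : E → F} {K V : Set E} (hK : IsCompact K) (hV : IsOpen V)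
    (hKV : K ⊆ V) (hf : ContDiffOn ℝ n f V) :
    ∃ g : E → F, ContDiff ℝ n g ∧ HasCompactSupport g ∧ EqOn g f K := by
  obtain ⟨L, hL, hKL, hLV⟩ := exists_compact_between hK hV hKV
  obtain ⟨χ, hχ_one, hχ_zero, -⟩ := exists_contMDiffMap_one_nhds_of_subset_interior (n := n)
    (modelWithCornersSelf ℝ E) hK.isClosed hKL
  refine ⟨fun x => χ x • f x, contDiff_iff_contDiffAt.2 fun x => ?_,
    .intro hL fun x hx => by simp [hχ_zero x hx],
    fun x hx => by simp [hχ_one.self_of_nhdsSet x hx]⟩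
  by_cases hx : x ∈ V
  · exact χ.contMDiff.contDiff.contDiffAt.smul (hf.contDiffAt (hV.mem_nhds hx))
  · have h_zero : (fun y => χ y • f y) =ᶠ[𝓝 x] fun _ => 0 := by
      filter_upwards [hL.isClosed.isOpen_compl.mem_nhds fun h => hx (hLV h)] with y hy
      simp [hχ_zero y hy]
    exact contDiffAt_const.congr_of_eventuallyEq h_zero

theorem norm_le_mul_dist_of_eq_zero_on_frontier {F : Type*} [NormedAddCommGroup F]
    {f : E → F} {C : ℝ≥0} (hf : LipschitzWith C f) {Ω : Set E}
    (hf_zero : ∀ x ∈ frontier Ω, f x = 0) {x y : E} (hx : x ∈ Ω) (hy : y ∉ Ω) :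
    ‖f x‖ ≤ C * dist x y := by
  obtain ⟨z, hz, hxz⟩ :=
    exists_mem_frontier_infDist_compl_eq_dist hx (ne_univ_iff_exists_notMem Ω |>.2 ⟨y, hy⟩)
  calc ‖f x‖ = dist (f x) (f z) := by rw [hf_zero z hz, dist_zero_right]
    _ ≤ C * dist x z := hf.dist_le_mul x z
    _ = C * Metric.infDist x Ωᶜ := by rw [hxz]
    _ ≤ C * dist x y := by gcongr; exact Metric.infDist_le_dist_of_mem hy

theorem lipschitzWith_indicator_of_eq_zero_on_frontier {F : Type*} [NormedAddCommGroup F]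
    {f : E → F} {C : ℝ≥0} (hf : LipschitzWith C f) {Ω : Set E}
    (hf_zero : ∀ x ∈ frontier Ω, f x = 0) : LipschitzWith C (Ω.indicator f) := by
  have h_exit {x y : E} (hx : x ∈ Ω) (hy : y ∉ Ω) : ‖f x‖ ≤ C * dist x y :=
    norm_le_mul_dist_of_eq_zero_on_frontier hf hf_zero hx hy
  refine LipschitzWith.of_dist_le_mul fun x y => ?_
  by_cases hx : x ∈ Ω <;> by_cases hy : y ∈ Ω
  · simpa [hx, hy] using hf.dist_le_mul x y
  · simpa [hx, hy] using h_exit hx hy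
  · simpa [hx, hy, dist_comm] using h_exit hy hx
  · simpa [hx, hy] using by positivity

section Measure

variable [MeasurableSpace E] [BorelSpace E] {μ : Measure E} [μ.IsAddHaarMeasure]

theorem ae_restrict_fderiv_eq_zero_of_eqOn_zero {f : E → ℝ} {s : Set E} (hs : MeasurableSet s)
    (hf : EqOn f 0 s) : ∀ᵐ x ∂μ.restrict s, fderiv ℝ f x = 0 := by
  rcases subsingleton_or_nontrivial E with _ | _
  · exact .of_forall fun x => ContinuousLinearMap.ext fun v => by simp [Subsingleton.elim v 0]
  obtain ⟨e, he⟩ := exists_ne (0 : E)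
  set t : Set E := s ∩ {x | DifferentiableAt ℝ f x}
  have ht : MeasurableSet t := hs.inter (measurableSet_of_differentiableAt ℝ f)
  -- `ApproximatesLinearOn` only covers self-maps of `E`, hence the detour through `f • e`.
  have h_approx : ApproximatesLinearOn (fun x => f x • e) (0 : E →L[ℝ] E) t 0 :=
    fun x hx y hy => by simp [hf hx.1, hf hy.1]
  have h_deriv : ∀ᵐ x ∂μ.restrict t, ‖(fderiv ℝ f x).smulRight e - 0‖₊ ≤ 0 :=
    h_approx.norm_fderiv_sub_le μ ht _
      fun x hx => (hx.2.hasFDerivAt.smul_const e).hasFDerivWithinAt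
  rw [ae_restrict_iff' ht] at h_deriv
  rw [ae_restrict_iff' hs]
  filter_upwards [h_deriv] with x hx hxs
  by_cases hdiff : DifferentiableAt ℝ f x
  · simpa [he] using hx ⟨hxs, hdiff⟩
  · exact fderiv_zero_of_not_differentiableAt hdiff

theorem integral_lineDeriv_eq_zero_of_hasCompactSupport {g : E → ℝ} {C : ℝ≥0}
    (hg : LipschitzWith C g) (hg_supp : HasCompactSupport g) (v : E) :
    ∫ x, lineDeriv ℝ g x v ∂μ = 0 := by
  simpa [lineDeriv] using
    ((LipschitzWith.const (α := E) (1 : ℝ)).integral_lineDeriv_mul_eq (μ := μ) hg hg_supp (-v)).symm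

theorem setIntegral_fderiv_eq_zero_of_hasCompactSupport {f : E → ℝ} (hf : ContDiff ℝ 1 f)
    (hf_supp : HasCompactSupport f) {Ω : Set E} (hΩ : IsOpen Ω)
    (hf_zero : ∀ x ∈ frontier Ω, f x = 0) (v : E) : ∫ x in Ω, fderiv ℝ f x v ∂μ = 0 := by
  obtain ⟨C, hC⟩ := ContDiff.lipschitzWith_of_hasCompactSupport hf_supp hf one_ne_zero
  set g : E → ℝ := Ω.indicator f
  have hg : LipschitzWith C g := lipschitzWith_indicator_of_eq_zero_on_frontier hC hf_zero
  have hg_supp : HasCompactSupport g :=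
    hf_supp.mono (support_indicator.trans_subset inter_subset_right)
  have hg_compl : ∀ᵐ x ∂μ, x ∈ Ωᶜ → fderiv ℝ g x = 0 :=
    (ae_restrict_iff' hΩ.measurableSet.compl).1 <|
      ae_restrict_fderiv_eq_zero_of_eqOn_zero hΩ.measurableSet.compl
        fun x hx => indicator_of_notMem hx f
  have h_ae : Ω.indicator (fun x => fderiv ℝ f x v) =ᵐ[μ] fun x => lineDeriv ℝ g x v := by
    filter_upwards [hg.ae_differentiableAt (μ := μ), hg_compl] with x hx hx_compl
    rw [hx.lineDeriv_eq_fderiv]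
    by_cases hxΩ : x ∈ Ω
    · have hgf : g =ᶠ[𝓝 x] f := (eqOn_indicator (f := f)).eventuallyEq_of_mem (hΩ.mem_nhds hxΩ)
      rw [indicator_of_mem hxΩ, hgf.fderiv_eq]
    · simp [hxΩ, hx_compl hxΩ]
  rw [← integral_indicator hΩ.measurableSet, integral_congr_ae h_ae]
  exact integral_lineDeriv_eq_zero_of_hasCompactSupport hg hg_supp v

theorem setIntegral_fderiv_eq_zero {f : E → ℝ} {Ω V : Set E} (hΩ : IsOpen Ω)
    (hΩ_bdd : Bornology.IsBounded Ω) (hV : IsOpen V) (hΩV : closure Ω ⊆ V)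
    (hf : ContDiffOn ℝ 1 f V) (hf_zero : ∀ x ∈ frontier Ω, f x = 0) (v : E) :
    ∫ x in Ω, fderiv ℝ f x v ∂μ = 0 := by
  obtain ⟨g, hg, hg_supp, hgf⟩ :=
    exists_contDiff_hasCompactSupport_eqOn (n := 1) hΩ_bdd.isCompact_closure hV hΩV hf
  have h_fderiv : EqOn (fun x => fderiv ℝ f x v) (fun x => fderiv ℝ g x v) Ω := fun x hx => by
    have h_near : f =ᶠ[𝓝 x] g :=
      (hgf.symm.mono subset_closure).eventuallyEq_of_mem (hΩ.mem_nhds hx)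
    simp only [h_near.fderiv_eq]
  rw [setIntegral_congr_fun hΩ.measurableSet h_fderiv]
  exact setIntegral_fderiv_eq_zero_of_hasCompactSupport hg hg_supp hΩ
    (fun x hx => (hgf hx.1).trans (hf_zero x hx)) v

end Measure

theorem eqOn_zero_of_fderiv_eq_zero_of_eq_zero_on_frontier [Nontrivial E] {f : E → ℝ}
    {Ω V : Set E} (hΩ : IsOpen Ω) (hΩ_bdd : Bornology.IsBounded Ω) (hV : IsOpen V)
    (hΩV : closure Ω ⊆ V) (hf : ContDiffOn ℝ 1 f V) (hf_zero : ∀ x ∈ frontier Ω, f x = 0)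
    (hf_deriv : ∀ x ∈ Ω, fderiv ℝ f x = 0) : EqOn f 0 Ω := by
  obtain ⟨v, hv⟩ := exists_ne (0 : E)
  obtain ⟨ℓ, hℓ⟩ : ∃ ℓ : E →L[ℝ] ℝ, ℓ v = 1 := SeparatingDual.exists_eq_one hv
  have hΩV' : Ω ⊆ V := subset_closure.trans hΩV
  have h_deriv : EqOn (fun x => f x ^ 2) (fun x => fderiv ℝ (fun y => ℓ y * f y ^ 2) x v) Ω := by
    intro x hx
    have hfx : HasFDerivAt f (0 : E →L[ℝ] ℝ) x := hf_deriv x hx ▸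
      ((hf.contDiffAt (hV.mem_nhds (hΩV' hx))).differentiableAt one_ne_zero).hasFDerivAt
    simp [(ℓ.hasFDerivAt.fun_mul (hfx.pow 2)).fderiv, hℓ]
  let _ : MeasurableSpace E := borel E
  have _ : BorelSpace E := ⟨rfl⟩
  have h_int : ∫ x in Ω, f x ^ 2 ∂Measure.addHaar = 0 := by
    rw [setIntegral_congr_fun hΩ.measurableSet h_deriv]
    exact setIntegral_fderiv_eq_zero hΩ hΩ_bdd hV hΩV (ℓ.contDiff.contDiffOn.mul (hf.pow 2))
      (fun x hx => by simp [hf_zero x hx]) v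
  have hsq : EqOn (fun x => f x ^ 2) 0 Ω :=
    eqOn_zero_of_setIntegral_eq_zero hΩ ((hf.continuousOn.mono hΩV').pow 2)
      (integrableOn_of_continuousOn_of_closure_subset hΩ_bdd hΩV (hf.continuousOn.pow 2))
      (fun x _ => sq_nonneg (f x)) h_int
  exact fun x hx => pow_eq_zero_iff two_ne_zero |>.1 (hsq hx)

end NormedSpace

/-- The partial derivative `∂ᵢ f` on `ℝ^ι`, with value `0` where `f` is not differentiable. -/
noncomputable def partialDeriv {ι : Type*} [Fintype ι] [DecidableEq ι] (i : ι)
    (f : (ι → ℝ) → ℝ) (x : ι → ℝ) : ℝ :=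
  fderiv ℝ f x (Pi.single i 1)

section PartialDeriv

variable {ι κ : Type*} [Fintype ι] [DecidableEq ι] {f g : (ι → ℝ) → ℝ} {x : ι → ℝ}

theorem partialDeriv_add (i : ι) (hf : DifferentiableAt ℝ f x) (hg : DifferentiableAt ℝ g x) :
    partialDeriv i (fun y => f y + g y) x = partialDeriv i f x + partialDeriv i g x := by
  simp [partialDeriv, fderiv_fun_add hf hg]

theorem partialDeriv_mul (i : ι) (hf : DifferentiableAt ℝ f x) (hg : DifferentiableAt ℝ g x) :
    partialDeriv i (fun y => f y * g y) x =
      f x * partialDeriv i g x + g x * partialDeriv i f x := by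
  simp [partialDeriv, fderiv_fun_mul hf hg]

theorem partialDeriv_const_mul (i : ι) (c : ℝ) (hf : DifferentiableAt ℝ f x) :
    partialDeriv i (fun y => c * f y) x = c * partialDeriv i f x := by
  simp [partialDeriv, fderiv_const_mul hf]

theorem partialDeriv_sum (i : ι) {s : Finset κ} {u : κ → (ι → ℝ) → ℝ}
    (hu : ∀ k ∈ s, DifferentiableAt ℝ (u k) x) :
    partialDeriv i (fun y => ∑ k ∈ s, u k y) x = ∑ k ∈ s, partialDeriv i (u k) x := by
  simp [partialDeriv, fderiv_fun_sum hu]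

theorem fderiv_eq_zero_of_partialDeriv_eq_zero (h : ∀ i, partialDeriv i f x = 0) :
    fderiv ℝ f x = 0 :=
  ContinuousLinearMap.coe_injective <| (Pi.basisFun ℝ ι).ext fun i => by
    simpa [partialDeriv] using h i

theorem contDiffOn_partialDeriv {m n : ℕ∞ω} {V : Set (ι → ℝ)} (hV : IsOpen V)
    (hf : ContDiffOn ℝ n f V) (hmn : m + 1 ≤ n) (i : ι) : ContDiffOn ℝ m (partialDeriv i f) V :=
  (hf.fderiv_of_isOpen hV hmn).clm_apply contDiffOn_const

theorem partialDeriv_comm (hf : ContDiffAt ℝ 2 f x) (i j : ι) :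
    partialDeriv i (partialDeriv j f) x = partialDeriv j (partialDeriv i f) x := by
  have hdf : DifferentiableAt ℝ (fderiv ℝ f) x :=
    (hf.fderiv_right (m := 1) (by norm_num)).differentiableAt one_ne_zero
  have h_second (k l : ι) : partialDeriv k (partialDeriv l f) x =
      fderiv ℝ (fderiv ℝ f) x (Pi.single k 1) (Pi.single l 1) := by
    unfold partialDeriv
    simp [fderiv_clm_apply hdf (differentiableAt_const _)]
  rw [h_second, h_second]
  exact (hf.isSymmSndFDerivAt (by simp)) _ _

end PartialDeriv

section EnergyMethod

variable {ι κ : Type*} [Fintype ι] [DecidableEq ι] [Fintype κ] {Ω V : Set (ι → ℝ)}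

theorem setIntegral_divergence_eq_zero {X : ι → (ι → ℝ) → ℝ} (hΩ : IsOpen Ω)
    (hΩ_bdd : Bornology.IsBounded Ω) (hV : IsOpen V) (hΩV : closure Ω ⊆ V)
    (hX : ∀ i, ContDiffOn ℝ 1 (X i) V) (hX_zero : ∀ i, ∀ x ∈ frontier Ω, X i x = 0) :
    ∫ x in Ω, ∑ i, partialDeriv i (X i) x = 0 := by
  have h_int (i : ι) : IntegrableOn (partialDeriv i (X i)) Ω :=
    integrableOn_of_continuousOn_of_closure_subset hΩ_bdd hΩV
      (contDiffOn_partialDeriv hV (hX i) (zero_add 1).le i).continuousOn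
  rw [integral_finsetSum _ fun i _ => h_int i]
  exact Finset.sum_eq_zero fun i _ =>
    setIntegral_fderiv_eq_zero hΩ hΩ_bdd hV hΩV (hX i) (hX_zero i) _

theorem divergence_sum_mul {w : κ → (ι → ℝ) → ℝ} {P : ι → κ → (ι → ℝ) → ℝ} {x : ι → ℝ}
    (hw : ∀ j, DifferentiableAt ℝ (w j) x) (hP : ∀ i j, DifferentiableAt ℝ (P i j) x) :
    ∑ i, partialDeriv i (fun y => ∑ j, P i j y * w j y) x =
      ∑ i, ∑ j, P i j x * partialDeriv i (w j) x +
        ∑ j, w j x * ∑ i, partialDeriv i (P i j) x := by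
  have h_deriv (i : ι) : partialDeriv i (fun y => ∑ j, P i j y * w j y) x =
      ∑ j, (P i j x * partialDeriv i (w j) x + w j x * partialDeriv i (P i j) x) := by
    rw [partialDeriv_sum i fun j _ => (hP i j).fun_mul (hw j)]
    exact Finset.sum_congr rfl fun j _ => partialDeriv_mul i (hP i j) (hw j)
  simp_rw [h_deriv, Finset.sum_add_distrib, Finset.mul_sum]
  rw [Finset.sum_comm (f := fun j i => w j x * partialDeriv i (P i j) x)]

theorem setIntegral_sum_mul_partialDeriv_eq_zero {w : κ → (ι → ℝ) → ℝ}
    {P : ι → κ → (ι → ℝ) → ℝ} (hΩ : IsOpen Ω) (hΩ_bdd : Bornology.IsBounded Ω) (hV : IsOpen V)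
    (hΩV : closure Ω ⊆ V) (hw : ∀ j, ContDiffOn ℝ 1 (w j) V)
    (hP : ∀ i j, ContDiffOn ℝ 1 (P i j) V)
    (hP_div : ∀ j, ∀ x ∈ Ω, ∑ i, partialDeriv i (P i j) x = 0)
    (hw_zero : ∀ j, ∀ x ∈ frontier Ω, w j x = 0) :
    ∫ x in Ω, ∑ i, ∑ j, P i j x * partialDeriv i (w j) x = 0 := by
  have h_div : EqOn (fun x => ∑ i, ∑ j, P i j x * partialDeriv i (w j) x)
      (fun x => ∑ i, partialDeriv i (fun y => ∑ j, P i j y * w j y) x) Ω := fun x hx => by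
    have hx_nhds : V ∈ 𝓝 x := hV.mem_nhds (hΩV (subset_closure hx))
    simp [divergence_sum_mul
      (fun j => ((hw j).contDiffAt hx_nhds).differentiableAt one_ne_zero)
      (fun i j => ((hP i j).contDiffAt hx_nhds).differentiableAt one_ne_zero), hP_div _ x hx]
  rw [setIntegral_congr_fun hΩ.measurableSet h_div]
  exact setIntegral_divergence_eq_zero hΩ hΩ_bdd hV hΩV
    (fun i => ContDiffOn.sum fun j _ => (hP i j).mul (hw j))
    (fun i x hx => by simp [hw_zero _ x hx])

theorem eqOn_zero_of_divergence_eq_zero_of_pos [Nonempty ι] {w : κ → (ι → ℝ) → ℝ}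
    {P : ι → κ → (ι → ℝ) → ℝ} (hΩ : IsOpen Ω) (hΩ_bdd : Bornology.IsBounded Ω) (hV : IsOpen V)
    (hΩV : closure Ω ⊆ V) (hw : ∀ j, ContDiffOn ℝ 1 (w j) V)
    (hP : ∀ i j, ContDiffOn ℝ 1 (P i j) V)
    (hP_div : ∀ j, ∀ x ∈ Ω, ∑ i, partialDeriv i (P i j) x = 0)
    (hP_pos : ∀ x ∈ Ω, (∃ i j, partialDeriv i (w j) x ≠ 0) →
      0 < ∑ i, ∑ j, P i j x * partialDeriv i (w j) x)
    (hw_zero : ∀ j, ∀ x ∈ frontier Ω, w j x = 0) (j : κ) : EqOn (w j) 0 Ω := by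
  have h_cont : ContinuousOn (fun x => ∑ i, ∑ j, P i j x * partialDeriv i (w j) x) V :=
    continuousOn_finsetSum _ fun i _ => continuousOn_finsetSum _ fun j _ =>
      (hP i j).continuousOn.mul
        (contDiffOn_partialDeriv hV (hw j) (zero_add 1).le i).continuousOn
  have h_nonneg : ∀ x ∈ Ω, 0 ≤ ∑ i, ∑ j, P i j x * partialDeriv i (w j) x := fun x hx => by
    by_cases h : ∃ i j, partialDeriv i (w j) x ≠ 0
    · exact (hP_pos x hx h).le
    · push Not at h
      simp [h]
  have h_energy : EqOn (fun x => ∑ i, ∑ j, P i j x * partialDeriv i (w j) x) 0 Ω :=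
    eqOn_zero_of_setIntegral_eq_zero hΩ (h_cont.mono (subset_closure.trans hΩV))
      (integrableOn_of_continuousOn_of_closure_subset hΩ_bdd hΩV h_cont) h_nonneg
      (setIntegral_sum_mul_partialDeriv_eq_zero hΩ hΩ_bdd hV hΩV hw hP hP_div hw_zero)
  have h_grad : ∀ x ∈ Ω, ∀ i, partialDeriv i (w j) x = 0 := fun x hx i => by
    by_contra h
    exact (hP_pos x hx ⟨i, j, h⟩).ne' (h_energy hx)
  exact eqOn_zero_of_fderiv_eq_zero_of_eq_zero_on_frontier hΩ hΩ_bdd hV hΩV (hw j) (hw_zero j)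
    fun x hx => fderiv_eq_zero_of_partialDeriv_eq_zero (h_grad x hx)

end EnergyMethod

section Stress

variable {n : ℕ} {β γ : ℝ}

/-- The stress of a gradient `A i j = ∂ᵢ wⱼ`, whose divergence
`∑ᵢ ∂ᵢ (stress β γ A i j)` is the operator `Δwⱼ + γ ∂₀∂ⱼ w₀ + β ∑ₖ ∂ₖ∂ⱼ wₖ`. Other stresses have the
same divergence; splitting the `γ`-term in two halves is what makes the energy coercive. -/
noncomputable def stress (β γ : ℝ) (A : Matrix (Fin (n + 1)) (Fin (n + 1)) ℝ) :
    Matrix (Fin (n + 1)) (Fin (n + 1)) ℝ :=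
  fun i j => A i j + (1 : Matrix _ _ ℝ) i j * (β * A.trace + γ / 2 * A 0 0) +
    Pi.single (M := fun _ => ℝ) 0 (γ / 2) i * A j 0

theorem sum_stress_mul (A : Matrix (Fin (n + 1)) (Fin (n + 1)) ℝ) :
    ∑ i, ∑ j, stress β γ A i j * A i j =
      ∑ i, ∑ j, A i j ^ 2 + β * A.trace ^ 2 +
        γ / 2 * ∑ j, (A 0 0 * A j j + A j 0 * A 0 j) := by
  have h_diag : ∑ i, ∑ j, (1 : Matrix _ _ ℝ) i j * (β * A.trace + γ / 2 * A 0 0) * A i j =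
      β * A.trace ^ 2 + γ / 2 * ∑ j, A 0 0 * A j j := by
    have h_trace : A.trace = ∑ i, A i i := rfl
    simp only [Matrix.one_apply, ite_mul, one_mul, zero_mul, Finset.sum_ite_eq, Finset.mem_univ,
      if_true, ← Finset.mul_sum, ← h_trace]
    ring
  have h_row : ∑ i, ∑ j, Pi.single (M := fun _ => ℝ) 0 (γ / 2) i * A j 0 * A i j =
      γ / 2 * ∑ j, A j 0 * A 0 j := by
    rw [Finset.sum_eq_single 0 (fun i _ hi => by simp [hi]) (by simp)]
    simp only [Pi.single_eq_same, mul_assoc, ← Finset.mul_sum]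
  simp only [stress, add_mul, Finset.sum_add_distrib, h_diag, h_row, pow_two]
  ring

theorem sum_sq_border_le (A : Matrix (Fin (n + 1)) (Fin (n + 1)) ℝ) :
    A 0 0 ^ 2 + ∑ j : Fin n, (A j.succ j.succ ^ 2 + A j.succ 0 ^ 2 + A 0 j.succ ^ 2) ≤
      ∑ i, ∑ j, A i j ^ 2 := by
  have h_diag (j : Fin n) : A j.succ j.succ ^ 2 ≤ ∑ k : Fin n, A j.succ k.succ ^ 2 :=
    Finset.single_le_sum (f := fun k : Fin n => A j.succ k.succ ^ 2)
      (fun k _ => sq_nonneg _) (Finset.mem_univ j)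
  have h_sum := Finset.sum_le_sum fun j (_ : j ∈ Finset.univ) => h_diag j
  simp only [Fin.sum_univ_succ (n := n), Finset.sum_add_distrib]
  linarith

theorem neg_mul_sum_sq_le_mul_sum {θ : ℝ} (hθ : 0 < θ) (hγ : n * γ ^ 2 ≤ 16 * θ ^ 2) (a : ℝ)
    (d : Fin n → ℝ) : -(θ * (a ^ 2 + ∑ j, d j ^ 2)) ≤ γ / 2 * ∑ j, a * d j := by
  have h_squares : 0 ≤ ∑ j, (θ * d j + γ / 4 * a) ^ 2 := Finset.sum_nonneg fun j _ => sq_nonneg _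
  have h_expand : ∑ j, (θ * d j + γ / 4 * a) ^ 2 =
      θ ^ 2 * ∑ j, d j ^ 2 + θ * (γ / 2 * ∑ j, a * d j) + n * γ ^ 2 / 16 * a ^ 2 := by
    simp only [add_sq, Finset.sum_add_distrib, Finset.sum_const, Finset.card_univ,
      Fintype.card_fin, nsmul_eq_mul, mul_pow, ← Finset.mul_sum, ← Finset.sum_mul, mul_assoc]
    ring
  have h_const : n * γ ^ 2 / 16 * a ^ 2 ≤ θ ^ 2 * a ^ 2 := by gcongr; linarith
  have h_mul : 0 ≤ θ * (θ * (a ^ 2 + ∑ j, d j ^ 2) + γ / 2 * ∑ j, a * d j) := by linarith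
  linarith [nonneg_of_mul_nonneg_right h_mul hθ]

theorem neg_mul_sq_add_sq_le_mul {θ : ℝ} (hγ : 0 ≤ γ) (hγθ : γ ≤ 4 * θ) (c r : ℝ) :
    -(θ * (c ^ 2 + r ^ 2)) ≤ γ / 2 * (c * r) := by
  nlinarith [mul_nonneg hγ (sq_nonneg (c + r)),
    mul_nonneg (sub_nonneg.2 hγθ) (add_nonneg (sq_nonneg c) (sq_nonneg r))]

theorem one_sub_mul_sum_sq_le_sum_stress_mul {θ : ℝ} (hθ : 0 < θ) (hβ : 0 ≤ β) (hγ : 0 ≤ γ)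
    (hγθ : n * γ ^ 2 ≤ 16 * θ ^ 2) (A : Matrix (Fin (n + 1)) (Fin (n + 1)) ℝ) :
    (1 - θ) * ∑ i, ∑ j, A i j ^ 2 ≤ ∑ i, ∑ j, stress β γ A i j * A i j := by
  have h_diag : -(θ * (A 0 0 ^ 2 + ∑ j : Fin n, A j.succ j.succ ^ 2)) ≤
      γ / 2 * ∑ j : Fin n, A 0 0 * A j.succ j.succ :=
    neg_mul_sum_sq_le_mul_sum hθ hγθ (A 0 0) fun j => A j.succ j.succ
  have h_border : -(θ * ∑ j : Fin n, (A j.succ 0 ^ 2 + A 0 j.succ ^ 2)) ≤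
      γ / 2 * ∑ j : Fin n, A j.succ 0 * A 0 j.succ := by
    rw [← neg_mul, Finset.mul_sum, Finset.mul_sum]
    refine Finset.sum_le_sum fun j _ => ?_
    have hn : (1 : ℝ) ≤ n := by exact_mod_cast j.pos
    have hγ_sq : γ ^ 2 ≤ (4 * θ) ^ 2 := by
      nlinarith [mul_nonneg (sub_nonneg.2 hn) (sq_nonneg γ)]
    rw [neg_mul]
    have hγ_le : γ ≤ 4 * θ := (pow_le_pow_iff_left₀ hγ (by positivity) two_ne_zero).1 hγ_sq
    exact neg_mul_sq_add_sq_le_mul hγ hγ_le _ _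
  have h_sq := mul_le_mul_of_nonneg_left (sum_sq_border_le A) hθ.le
  have h_trace : 0 ≤ β * A.trace ^ 2 := by positivity
  have h_corner : 0 ≤ γ * A 0 0 ^ 2 := by positivity
  rw [sum_stress_mul, Fin.sum_univ_succ (f := fun j => A 0 0 * A j j + A j 0 * A 0 j)]
  simp only [Finset.sum_add_distrib] at h_border h_sq ⊢
  linarith

theorem sum_stress_mul_pos (hβ : 0 ≤ β) (hγ : 0 ≤ γ) (hγn : n * γ ^ 2 < 16)
    {A : Matrix (Fin (n + 1)) (Fin (n + 1)) ℝ} (hA : ∃ i j, A i j ≠ 0) :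
    0 < ∑ i, ∑ j, stress β γ A i j * A i j := by
  set θ : ℝ := (1 + n * γ ^ 2 / 16) / 2
  have hθ : 0 < θ := by positivity
  have hθ_one : θ < 1 := by simp only [θ]; linarith
  -- AM-GM for `1` and `n * γ ^ 2 / 16`
  have hγθ : n * γ ^ 2 ≤ 16 * θ ^ 2 := by
    simp only [θ]; nlinarith [sq_nonneg (1 - n * γ ^ 2 / 16)]
  obtain ⟨i, j, hij⟩ := hA
  have h_norm : 0 < ∑ i, ∑ j, A i j ^ 2 :=
    Finset.sum_pos' (fun i _ => Finset.sum_nonneg fun j _ => sq_nonneg _) ⟨i, Finset.mem_univ i,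
      Finset.sum_pos' (fun j _ => sq_nonneg _) ⟨j, Finset.mem_univ j, by positivity⟩⟩
  exact (mul_pos (sub_pos.2 hθ_one) h_norm).trans_le
    (one_sub_mul_sum_sq_le_sum_stress_mul hθ hβ hγ hγθ A)

theorem contDiffOn_stress {m : ℕ∞ω} {V : Set (Fin (n + 1) → ℝ)}
    {A : Matrix (Fin (n + 1)) (Fin (n + 1)) ((Fin (n + 1) → ℝ) → ℝ)}
    (hA : ∀ i j, ContDiffOn ℝ m (A i j) V) (i j : Fin (n + 1)) :
    ContDiffOn ℝ m (fun x => stress β γ (fun k l => A k l x) i j) V := by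
  have h_trace : ContDiffOn ℝ m (fun x => ∑ k, A k k x) V := ContDiffOn.sum fun k _ => hA k k
  exact ((hA i j).add (contDiffOn_const.mul ((contDiffOn_const.mul h_trace).add
    (contDiffOn_const.mul (hA 0 0))))).add (contDiffOn_const.mul (hA j 0))

theorem partialDeriv_stress {A : Matrix (Fin (n + 1)) (Fin (n + 1)) ((Fin (n + 1) → ℝ) → ℝ)}
    {x : Fin (n + 1) → ℝ} (hA : ∀ i j, DifferentiableAt ℝ (A i j) x) (i j k : Fin (n + 1)) :
    partialDeriv k (fun y => stress β γ (fun i j => A i j y) i j) x =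
      stress β γ (fun i j => partialDeriv k (A i j) x) i j := by
  simp only [stress, Matrix.trace, Matrix.diag]
  rw [partialDeriv_add, partialDeriv_add, partialDeriv_const_mul, partialDeriv_add,
    partialDeriv_const_mul, partialDeriv_sum, partialDeriv_const_mul, partialDeriv_const_mul]
  all_goals fun_prop

theorem divergence_stress_gradient {w : Fin (n + 1) → (Fin (n + 1) → ℝ) → ℝ}
    {x : Fin (n + 1) → ℝ} (hw : ∀ k, ContDiffAt ℝ 2 (w k) x) (j : Fin (n + 1)) :
    ∑ i, partialDeriv i (fun y => stress β γ (fun k l => partialDeriv k (w l) y) i j) x =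
      ∑ i, partialDeriv i (partialDeriv i (w j)) x +
        γ * partialDeriv 0 (partialDeriv j (w 0)) x +
          β * ∑ k, partialDeriv k (partialDeriv j (w k)) x := by
  have h_diff (k l : Fin (n + 1)) : DifferentiableAt ℝ (partialDeriv k (w l)) x :=
    (((hw l).fderiv_right (m := 1) (by norm_num)).clm_apply contDiffAt_const).differentiableAt
      one_ne_zero
  simp only [partialDeriv_stress (A := fun k l => partialDeriv k (w l)) h_diff]
  simp only [stress, Matrix.trace, Matrix.diag, Finset.sum_add_distrib, Matrix.one_apply, ite_mul,
    one_mul, zero_mul, Finset.sum_ite_eq', Finset.mem_univ, if_true, Pi.single_apply]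
  simp only [partialDeriv_comm (hw _) j]
  ring

end Stress

theorem stmt_12_general {n : ℕ} {α β : ℝ} (hβ : 0 ≤ β) (hβα : β ≤ α)
    (hαβ : n * (α - β) ^ 2 < 16) {Ω V : Set (Fin (n + 1) → ℝ)} (hΩ : IsOpen Ω)
    (hΩ_bdd : Bornology.IsBounded Ω) (hV : IsOpen V) (hΩV : closure Ω ⊆ V)
    {w : Fin (n + 1) → (Fin (n + 1) → ℝ) → ℝ} (hw : ∀ j, ContDiffOn ℝ 2 (w j) V)
    (h_eq : ∀ j, ∀ z ∈ Ω,
      ∑ i, partialDeriv i (partialDeriv i (w j)) z +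
        (α - β) * partialDeriv 0 (partialDeriv j (w 0)) z +
          β * ∑ k, partialDeriv k (partialDeriv j (w k)) z = 0)
    (hw_zero : ∀ j, ∀ z ∈ frontier Ω, w j z = 0) (j : Fin (n + 1)) :
    ∀ z ∈ Ω, w j z = 0 := by
  have hw_grad (i j : Fin (n + 1)) : ContDiffOn ℝ 1 (partialDeriv i (w j)) V :=
    contDiffOn_partialDeriv hV (hw j) one_add_one_eq_two.le i
  refine eqOn_zero_of_divergence_eq_zero_of_pos hΩ hΩ_bdd hV hΩV
    (P := fun i j x => stress β (α - β) (fun k l => partialDeriv k (w l) x) i j)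
    (fun j => (hw j).of_le one_le_two) (contDiffOn_stress hw_grad) (fun j z hz => ?_)
    (fun z _ => sum_stress_mul_pos hβ (sub_nonneg.2 hβα) hαβ) hw_zero j
  have hz_nhds : V ∈ 𝓝 z := hV.mem_nhds (hΩV (subset_closure hz))
  rw [divergence_stress_gradient (fun k => (hw k).contDiffAt hz_nhds), h_eq j z hz]

section Coefficients

variable {n : ℕ}

theorem one_sub_two_div_nonneg (hn : 3 ≤ n) : 0 ≤ 1 - 2 / ((n : ℝ) - 1) := by
  have hn' : (3 : ℝ) ≤ n := by exact_mod_cast hn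
  rw [sub_nonneg, div_le_one (by linarith)]
  linarith

theorem one_sub_two_div_le_one_add (hn : 1 ≤ n) :
    1 - 2 / ((n : ℝ) - 1) ≤ 1 + 2 / ((n : ℝ) - 1) := by
  have hn' : (1 : ℝ) ≤ n := by exact_mod_cast hn
  have h_nonneg : 0 ≤ 2 / ((n : ℝ) - 1) := div_nonneg two_pos.le (by linarith)
  linarith

theorem mul_sq_coefficient_sub_lt_sixteen (hn : 3 ≤ n) :
    n * ((1 + 2 / ((n : ℝ) - 1)) - (1 - 2 / ((n : ℝ) - 1))) ^ 2 < 16 := by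
  have hn' : (3 : ℝ) ≤ n := by exact_mod_cast hn
  have hn_ne : (n : ℝ) - 1 ≠ 0 := by linarith
  have h_eq : n * ((1 + 2 / ((n : ℝ) - 1)) - (1 - 2 / ((n : ℝ) - 1))) ^ 2 =
      16 * n / ((n : ℝ) - 1) ^ 2 := by
    field_simp
    ring
  rw [h_eq, div_lt_iff₀ (by nlinarith)]
  nlinarith

end Coefficients

/-- Uniqueness for the homogeneous Dirichlet problem for the adjoint elliptic
system `A*(t,x;∇)w = 0` arising in the tensor decomposition (`n ≥ 4`):
`Δw₀ + (α−β)∂₀²w₀ + β Σₖ ∂ₖ∂₀wₖ = 0`,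
`Δwⱼ + (α−β)∂₀∂ⱼw₀ + β Σₖ ∂ₖ∂ⱼwₖ = 0` (`1 ≤ j ≤ n`) on `Ω`, with `w = 0`
on `∂Ω`, imply `w ≡ 0` on `Ω`. Here `α = 1 + 2/(n−1)`, `β = 1 − 2/(n−1)` and
`Δ = Σᵢ ∂ᵢ²` is the full Laplacian on `ℝ^{1+n}`. -/
theorem stmt_12 (n : ℕ) (hn : 4 ≤ n) (Ω : Set (Fin (n + 1) → ℝ))
    (hΩopen : IsOpen Ω) (hΩconn : IsConnected Ω)
    (hΩbdd : Bornology.IsBounded Ω)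
    (w : Fin (n + 1) → (Fin (n + 1) → ℝ) → ℝ)
    (hw : ∃ V : Set (Fin (n + 1) → ℝ), IsOpen V ∧ closure Ω ⊆ V ∧
      ∀ i, ContDiffOn ℝ (⊤ : ℕ∞) (w i) V)
    (heq0 : ∀ z ∈ Ω,
      (∑ i, fderiv ℝ (fun y => fderiv ℝ (w 0) y (Pi.single i 1)) z (Pi.single i 1))
        + ((1 + 2 / ((n : ℝ) - 1)) - (1 - 2 / ((n : ℝ) - 1))) *
          fderiv ℝ (fun y => fderiv ℝ (w 0) y (Pi.single 0 1)) z (Pi.single 0 1)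
        + (1 - 2 / ((n : ℝ) - 1)) *
          (∑ k, fderiv ℝ (fun y => fderiv ℝ (w k) y (Pi.single 0 1)) z
            (Pi.single k 1)) = 0)
    (heqj : ∀ j : Fin (n + 1), j ≠ 0 → ∀ z ∈ Ω,
      (∑ i, fderiv ℝ (fun y => fderiv ℝ (w j) y (Pi.single i 1)) z (Pi.single i 1))
        + ((1 + 2 / ((n : ℝ) - 1)) - (1 - 2 / ((n : ℝ) - 1))) *
          fderiv ℝ (fun y => fderiv ℝ (w 0) y (Pi.single j 1)) z (Pi.single 0 1)
        + (1 - 2 / ((n : ℝ) - 1)) *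
          (∑ k, fderiv ℝ (fun y => fderiv ℝ (w k) y (Pi.single j 1)) z
            (Pi.single k 1)) = 0)
    (hbd : ∀ i : Fin (n + 1), ∀ z ∈ frontier Ω, w i z = 0) :
    ∀ i : Fin (n + 1), ∀ z ∈ Ω, w i z = 0 := by
  obtain ⟨V, hV, hΩV, hwV⟩ := hw
  have hn' : 3 ≤ n := by lia
  exact stmt_12_general (one_sub_two_div_nonneg hn') (one_sub_two_div_le_one_add (by lia))
    (mul_sq_coefficient_sub_lt_sixteen hn') hΩopen hΩbdd hV hΩV
    (fun i => (hwV i).of_le (WithTop.coe_le_coe.2 le_top))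
    (fun j => by rcases eq_or_ne j 0 with rfl | hj; exacts [heq0, heqj j hj]) hbd
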